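/- arXiv:2511.22624 — 4 statements merged into one kernel-verified Lean document; each statement's English description precedes it below -/
import Mathlib

section
/- Let A_P, A_V, B_V, A_I, n, p, T, R, m, b, b′ be real numbers with A_P, A_V, B_V, A_I, n ≥ 0, p > 0, T ≥ 0, 0 ≤ b′ ≤ 2/3, A_P·n·p ≤ 1/2 and m·p ≤ 1/2. Assume: (i) 2^{−R} · (A_P·n·p/3 + 2/3) ≤ 2·A_V·n·p; (ii) T · (18·(4·A_V·n + 2·B_V)·p + 3·A_I·n·p) ≤ 2; and (iii) b ≤ T · ( ((A_P·n·p·(1−b′) + b′)·2^{−R} + 2·(A_V·n + B_V)·p) / ((1−m·p)·(1−b′)) + A_I·n·p ). Then b ≤ 2/3. -/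
/-!
Dividing the recursive bound by `1 - b'` turns the preparation term `a * (1 - b') + b'` into
`a + b' / (1 - b')`, which increases with `b'`. The right-hand side of the recursion is therefore
largest when `b'` and `m * p` sit at their thresholds `c` and `d`. There the choice of `R` bounds
the errors that escape verification by `2 * A_V * n * p`, and the choice of `T` makes the total at
most `c`, so the threshold reproduces itself one level up.
-/

section OrderedField

variable {K : Type*} [Field K] [LinearOrder K] [IsStrictOrderedRing K]

lemma mul_one_sub_add_div_one_sub_le {a x c : K} (hxc : x ≤ c) (hc : c < 1) :
    (a * (1 - x) + x) / (1 - x) ≤ (a * (1 - c) + c) / (1 - c) := by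
  have hc' : 0 < 1 - c := sub_pos.2 hc
  have hx' : 0 < 1 - x := sub_pos.2 (hxc.trans_lt hc)
  have hodds : x / (1 - x) ≤ c / (1 - c) := by
    rw [div_le_div_iff₀ hx' hc']
    linarith
  rw [add_div, add_div, mul_div_cancel_right₀ _ hx'.ne', mul_div_cancel_right₀ _ hc'.ne']
  gcongr

/-- In the recursion, `a` bounds the preparation error, `x` the error rate of a child, `w` the
verification error and `s = m * p` the probability of rejection, and `q` is `2 ^ (-R)`. -/
lemma accepted_block_error_le {a q v w s x c d : K} (hq : 0 ≤ q) (hw : 0 ≤ w) (hvw : 0 ≤ v + w)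
    (hxc : x ≤ c) (hc : c < 1) (hsd : s ≤ d) (hd : d < 1)
    (hv : q * (a * (1 - c) + c) ≤ v) :
    ((a * (1 - x) + x) * q + w) / ((1 - s) * (1 - x)) ≤ (v + w) / ((1 - d) * (1 - c)) := by
  have : 0 < 1 - c := sub_pos.2 hc
  have : 0 < 1 - d := sub_pos.2 hd
  have hs' : 0 < 1 - s := sub_pos.2 (hsd.trans_lt hd)
  calc ((a * (1 - x) + x) * q + w) / ((1 - s) * (1 - x))
      = (q * ((a * (1 - x) + x) / (1 - x)) + w / (1 - x)) / (1 - s) := by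
        rw [mul_comm (1 - s), ← div_div]
        ring
    _ ≤ (q * ((a * (1 - c) + c) / (1 - c)) + w / (1 - c)) / (1 - s) := by
        gcongr (q * ?_ + w / (1 - ?_)) / _
        exact mul_one_sub_add_div_one_sub_le hxc hc
    _ = (q * (a * (1 - c) + c) + w) / (1 - c) / (1 - s) := by ring
    _ ≤ (v + w) / (1 - c) / (1 - s) := by gcongr
    _ ≤ (v + w) / (1 - c) / (1 - d) := by gcongr
    _ = (v + w) / ((1 - d) * (1 - c)) := by rw [div_div, mul_comm (1 - c)]

/-- Here `q` stands for `2 ^ (-R)`, and `c` and `d` for the thresholds `2 / 3` and `1 / 2`. -/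
theorem bounded_error_step_general {A_P A_V B_V A_I n p T q m b b' c d : K}
    (hAV : 0 ≤ A_V) (hBV : 0 ≤ B_V) (hn : 0 ≤ n) (hp : 0 ≤ p) (hT : 0 ≤ T) (hq : 0 ≤ q)
    (hc : c < 1) (hd : d < 1) (hb' : b' ≤ c) (hmp : m * p ≤ d)
    (hR : q * (A_P * n * p * (1 - c) + c) ≤ 2 * A_V * n * p)
    (hTc : T * ((4 * A_V * n + 2 * B_V) * p / ((1 - d) * (1 - c)) + A_I * n * p) ≤ c)
    (hb : b ≤ T * (((A_P * n * p * (1 - b') + b') * q + 2 * (A_V * n + B_V) * p)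
          / ((1 - m * p) * (1 - b')) + A_I * n * p)) :
    b ≤ c := by
  have hsum : 2 * A_V * n * p + 2 * (A_V * n + B_V) * p = (4 * A_V * n + 2 * B_V) * p := by ring
  have hblock := accepted_block_error_le hq (by positivity : 0 ≤ 2 * (A_V * n + B_V) * p)
    (by positivity) hb' hc hmp hd hR
  rw [hsum] at hblock
  calc b ≤ _ := hb
    _ ≤ T * ((4 * A_V * n + 2 * B_V) * p / ((1 - d) * (1 - c)) + A_I * n * p) := by gcongr
    _ ≤ c := hTc

end OrderedField

/-- One-level inductive step of the uniformly bounded recursive CliNR error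
analysis: if the error bound `b'` at the lower level is at most `2/3`, then the
error bound `b` at the level above is also at most `2/3`. -/
theorem bounded_error_step (A_P A_V B_V A_I n p T R m b b' : ℝ)
    (hAP : 0 ≤ A_P) (hAV : 0 ≤ A_V) (hBV : 0 ≤ B_V) (hAI : 0 ≤ A_I) (hn : 0 ≤ n)
    (hp : 0 < p) (hT : 0 ≤ T) (hb'0 : 0 ≤ b') (hb' : b' ≤ 2 / 3)
    (hAPnp : A_P * n * p ≤ 1 / 2) (hmp : m * p ≤ 1 / 2)
    (hR : (2 : ℝ) ^ (-R) * (A_P * n * p / 3 + 2 / 3) ≤ 2 * A_V * n * p)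
    (hT2 : T * (18 * (4 * A_V * n + 2 * B_V) * p + 3 * A_I * n * p) ≤ 2)
    (hb : b ≤ T * (((A_P * n * p * (1 - b') + b') * (2 : ℝ) ^ (-R)
          + 2 * (A_V * n + B_V) * p) / ((1 - m * p) * (1 - b')) + A_I * n * p)) :
    b ≤ 2 / 3 :=
  bounded_error_step_general hAV hBV hn hp.le hT (by positivity) (by norm_num)
    one_half_lt_one hb' hmp (by linarith) (by norm_num1; linarith) hb
end

section
/- Let A_P, A_V, B_V, A_I, n, p, T, R, m be real numbers with A_P, A_V, B_V, A_I, n ≥ 0, p > 0, T ≥ 0, A_P·n·p ≤ 1/2 and m·p ≤ 1/2, satisfying 2^{−R} · (A_P·n·p/3 + 2/3) ≤ 2·A_V·n·p and T · (18·(4·A_V·n + 2·B_V)·p + 3·A_I·n·p) ≤ 2. Let D ≥ 1 be a natural number and let b : ℕ → ℝ be a sequence with 0 ≤ b(ℓ) for all ℓ ∈ {1,…,D}, with b(D) ≤ 2/3, and such that for every ℓ with 1 ≤ ℓ ≤ D−1 one has b(ℓ) ≤ T · ( ((A_P·n·p·(1−b(ℓ+1)) + b(ℓ+1))·2^{−R}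 + 2·(A_V·n + B_V)·p) / ((1−m·p)·(1−b(ℓ+1))) + A_I·n·p ). Then b(ℓ) ≤ 2/3 for every ℓ ∈ {1,…,D}. -/
/-!
As a function of the children's error rate `x`, the right-hand side of the recursion is
nondecreasing on `x < 1`: dividing the numerator by `1 - x` turns it into a constant plus
`(q + v) / (1 - x)`, where `q = 2 ^ (-R)` and `v` is the verification term. The parameter bounds
make its value at `x = 2/3` at most `2/3`, so it maps `(-∞, 2/3]` into itself, and the bound
propagates from the leaves to the root.
-/

open Set

section Recursion

variable {α : Type*} [Preorder α] {f : α → α} {c : α} {b : ℕ → α} {k D : ℕ}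

theorem le_of_le_apply_succ (hf : MapsTo f (Iic c) (Iic c)) (hD : b D ≤ c)
    (hrec : ∀ ℓ, k ≤ ℓ → ℓ < D → b ℓ ≤ f (b (ℓ + 1))) {ℓ : ℕ} (hk : k ≤ ℓ) (hℓ : ℓ ≤ D) :
    b ℓ ≤ c := by
  induction hℓ using Nat.decreasingInduction with
  | self => exact hD
  | of_succ j hj ih => exact (hrec j hk hj).trans (hf (ih (hk.trans j.le_succ)))

end Recursion

section ErrorBounds

variable {𝕜 : Type*} [Field 𝕜]

/-- Bound on the logical error rate of one CliNR block after postselection on its verification.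
Here `a` bounds the fault probability of the resource state preparation, `q` is the probability
that the stabilizer measurements miss a fault, `v` is the contribution of faults in the
verification itself, `μ` is a lower bound on the probability that a preparation and verification
iteration is free of physical faults, and `x` is the error rate of the subtrees below the block.
The value is junk at `x = 1` and at `μ = 0`. -/
def blockErrorBound (a q v μ x : 𝕜) : 𝕜 :=
  ((a * (1 - x) + x) * q + v) / (μ * (1 - x))

/-- Union bound on the error rate of a subtree over its at most `T` children, each contributing
the error of its block and an injection error `i`, as a function of the error rate `x` one level
deeper. -/
def levelErrorBound (T a q v μ i x : 𝕜) : 𝕜 :=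
  T * (blockErrorBound a q v μ x + i)

theorem blockErrorBound_eq_add_div (a q v μ : 𝕜) {x : 𝕜} (hx : x ≠ 1) :
    blockErrorBound a q v μ x = ((a - 1) * q + (q + v) / (1 - x)) / μ := by
  have hx' : 1 - x ≠ 0 := sub_ne_zero.mpr hx.symm
  rw [blockErrorBound, div_mul_eq_div_div_swap]
  congr 1
  field_simp
  ring

variable [LinearOrder 𝕜] [IsStrictOrderedRing 𝕜] {T a q v w μ μ₀ i x : 𝕜}

theorem monotoneOn_blockErrorBound (hqv : 0 ≤ q + v) (hμ : 0 ≤ μ) :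
    MonotoneOn (blockErrorBound a q v μ) (Iio 1) := by
  intro x hx y hy hxy
  have : 0 < 1 - y := sub_pos.mpr hy
  rw [blockErrorBound_eq_add_div a q v μ hx.ne, blockErrorBound_eq_add_div a q v μ hy.ne]
  gcongr

theorem monotoneOn_levelErrorBound (hT : 0 ≤ T) (hqv : 0 ≤ q + v) (hμ : 0 ≤ μ) :
    MonotoneOn (levelErrorBound T a q v μ i) (Iio 1) := fun _ hx _ hy hxy ↦
  mul_le_mul_of_nonneg_left
    (add_le_add_left (monotoneOn_blockErrorBound hqv hμ hx hy hxy) i) hT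

theorem blockErrorBound_le_div (hx : x < 1) (hμ₀ : 0 < μ₀) (hμ : μ₀ ≤ μ)
    (hw : (a * (1 - x) + x) * q ≤ w) (hwv : 0 ≤ w + v) :
    blockErrorBound a q v μ x ≤ (w + v) / (μ₀ * (1 - x)) := by
  have : 0 < 1 - x := sub_pos.mpr hx
  unfold blockErrorBound
  gcongr

theorem levelErrorBound_two_thirds_le (hT : 0 ≤ T) (hμ : 1 / 2 ≤ μ)
    (hw : q * (a / 3 + 2 / 3) ≤ w) (hwv : 0 ≤ w + v) (hTi : T * (18 * (w + v) + 3 * i) ≤ 2) :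
    levelErrorBound T a q v μ i (2 / 3) ≤ 2 / 3 := by
  have hblock : blockErrorBound a q v μ (2 / 3) ≤ (w + v) / (1 / 2 * (1 - 2 / 3)) :=
    blockErrorBound_le_div (by norm_num) (by norm_num) hμ (by linarith) hwv
  calc levelErrorBound T a q v μ i (2 / 3)
      ≤ T * ((w + v) / (1 / 2 * (1 - 2 / 3)) + i) := by unfold levelErrorBound; gcongr
    _ = T * (18 * (w + v) + 3 * i) / 3 := by ring
    _ ≤ 2 / 3 := by gcongr

theorem mapsTo_levelErrorBound_Iic_two_thirds (hT : 0 ≤ T) (hqv : 0 ≤ q + v) (hμ : 1 / 2 ≤ μ)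
    (hw : q * (a / 3 + 2 / 3) ≤ w) (hwv : 0 ≤ w + v) (hTi : T * (18 * (w + v) + 3 * i) ≤ 2) :
    MapsTo (levelErrorBound T a q v μ i) (Iic (2 / 3)) (Iic (2 / 3)) := by
  have hmono : MonotoneOn (levelErrorBound T a q v μ i) (Iic (2 / 3)) :=
    (monotoneOn_levelErrorBound hT hqv (by linarith)).mono (Iic_subset_Iio.mpr (by norm_num))
  exact hmono.mapsTo_Iic.mono_right
    (Iic_subset_Iic.mpr (levelErrorBound_two_thirds_le hT hμ hw hwv hTi))

end ErrorBounds

theorem bounded_error_levels_general {𝕜 : Type*} [Field 𝕜] [LinearOrder 𝕜]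
    [IsStrictOrderedRing 𝕜] {A_P A_V B_V A_I n p T q m : 𝕜}
    (hAV : 0 ≤ A_V) (hBV : 0 ≤ B_V) (hn : 0 ≤ n) (hp : 0 ≤ p) (hT : 0 ≤ T) (hq : 0 ≤ q)
    (hmp : m * p ≤ 1 / 2)
    (hqV : q * (A_P * n * p / 3 + 2 / 3) ≤ 2 * A_V * n * p)
    (hT2 : T * (18 * (4 * A_V * n + 2 * B_V) * p + 3 * A_I * n * p) ≤ 2)
    {D : ℕ} {b : ℕ → 𝕜} (hbD : b D ≤ 2 / 3)
    (hrec : ∀ ℓ, 1 ≤ ℓ → ℓ ≤ D - 1 →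
      b ℓ ≤ T * (((A_P * n * p * (1 - b (ℓ + 1)) + b (ℓ + 1)) * q
          + 2 * (A_V * n + B_V) * p) / ((1 - m * p) * (1 - b (ℓ + 1)))
          + A_I * n * p)) :
    ∀ ℓ, 1 ≤ ℓ → ℓ ≤ D → b ℓ ≤ 2 / 3 := by
  have hmaps : MapsTo (levelErrorBound T (A_P * n * p) q (2 * (A_V * n + B_V) * p) (1 - m * p)
      (A_I * n * p)) (Iic (2 / 3)) (Iic (2 / 3)) :=
    mapsTo_levelErrorBound_Iic_two_thirds hT (by positivity) (by linarith) hqV (by positivity)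
      (by linarith)
  exact fun ℓ ↦ le_of_le_apply_succ hmaps hbD fun j hj hjD ↦ hrec j hj (Nat.le_sub_one_of_lt hjD)

/-- Level-by-level invariant for the uniformly bounded recursive CliNR
implementation: the subtree error bound `b ℓ` stays at most `2/3` at every
level `ℓ ∈ {1, …, D}` of the CliNR tree. -/
theorem bounded_error_levels (A_P A_V B_V A_I n p T R m : ℝ)
    (hAP : 0 ≤ A_P) (hAV : 0 ≤ A_V) (hBV : 0 ≤ B_V) (hAI : 0 ≤ A_I) (hn : 0 ≤ n)
    (hp : 0 < p) (hT : 0 ≤ T)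
    (hAPnp : A_P * n * p ≤ 1 / 2) (hmp : m * p ≤ 1 / 2)
    (hR : (2 : ℝ) ^ (-R) * (A_P * n * p / 3 + 2 / 3) ≤ 2 * A_V * n * p)
    (hT2 : T * (18 * (4 * A_V * n + 2 * B_V) * p + 3 * A_I * n * p) ≤ 2)
    (D : ℕ) (hD : 1 ≤ D) (b : ℕ → ℝ)
    (hb0 : ∀ ℓ, 1 ≤ ℓ → ℓ ≤ D → 0 ≤ b ℓ)
    (hbD : b D ≤ 2 / 3)
    (hrec : ∀ ℓ, 1 ≤ ℓ → ℓ ≤ D - 1 →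
      b ℓ ≤ T * (((A_P * n * p * (1 - b (ℓ + 1)) + b (ℓ + 1)) * (2 : ℝ) ^ (-R)
          + 2 * (A_V * n + B_V) * p) / ((1 - m * p) * (1 - b (ℓ + 1)))
          + A_I * n * p)) :
    ∀ ℓ, 1 ≤ ℓ → ℓ ≤ D → b ℓ ≤ 2 / 3 :=
  bounded_error_levels_general hAV hBV hn hp.le hT (Real.rpow_nonneg zero_le_two (-R)) hmp hR hT2
    hbD hrec
end

section
/- Let A_P, A_V, B_V, A_I, n, p, T, R, m, b₁, t₁, P be real numbers with A_P, A_V, B_V, A_I, n ≥ 0, p > 0, T > 0, t₁ ≥ 0, 0 ≤ b₁ ≤ 2/3, A_P·n·p ≤ 1/2 and m·p ≤ 1/2. Assume: (i) 2^{−R} · (A_P·n·p/3 + 2/3) ≤ 2·A_V·n·p; (ii) T · (18·(4·A_V·n + 2·B_V)·p + 3·A_I·n·p) ≤ 2; and (iii) P ≤ t₁ · ( ((A_P·n·p·(1−b₁) + b₁)·2^{−R} + 2·(A_V·n + B_V)·p) / ((1−m·p)·(1−b₁)) + A_I·n·p ). Then P ≤ (2/3)·(t₁/T). -/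
/-!
The recursive error bound is increasing in the subtree error rate `b₁`: since
`(a * (1 - b) + b) * r + c = (a - 1) * r * (1 - b) + (r + c)`, dividing by `1 - b` leaves `b` only
in the term `(r + c) / (1 - b)`. So `b₁` may be replaced by `2 / 3`, where the product
`(a * (1 - b) + b) * r` becomes the quantity controlled by (i). Replacing `m * p` by `1 / 2` makes
the denominator `1 / 6`, which gives the factor `18 = 3 * 6` in (ii), the `3` clearing the
denominator of `2 / 3`.
-/

section PostselectedErrorRate

variable {K : Type*} [Field K]

/-- The bound on the logical error rate of a block, given that its verification accepts.
The input is faulty with probability `a * (1 - b) + b` (`a` for the preparation, `b` for the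
subtrees) and a fault escapes detection with probability `r`; `c` accounts for the errors of the
verification itself, and `(1 - q) * (1 - b)` bounds the acceptance probability from below. -/
def postselectedErrorRate (a b r c q : K) : K :=
  ((a * (1 - b) + b) * r + c) / ((1 - q) * (1 - b))

theorem postselectedErrorRate_eq {b : K} (hb : b ≠ 1) (a r c q : K) :
    postselectedErrorRate a b r c q = ((a - 1) * r + (r + c) / (1 - b)) / (1 - q) := by
  have hb' : 1 - b ≠ 0 := sub_ne_zero.2 hb.symm
  rw [postselectedErrorRate, mul_comm (1 - q), ← div_div]
  congr 1
  field_simp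
  ring

variable [LinearOrder K] [IsStrictOrderedRing K] {r c q : K}

theorem monotoneOn_postselectedErrorRate (hrc : 0 ≤ r + c) (hq : q < 1) (a : K) :
    MonotoneOn (fun b ↦ postselectedErrorRate a b r c q) (Set.Iio 1) := by
  intro b hb β hβ hbβ
  have : 0 < 1 - β := sub_pos.2 hβ
  have : 0 < 1 - q := sub_pos.2 hq
  simp only [postselectedErrorRate_eq (ne_of_lt hb), postselectedErrorRate_eq (ne_of_lt hβ)]
  gcongr

theorem postselectedErrorRate_le {a b β κ N : K} (hrc : 0 ≤ r + c) (hN : 0 ≤ N)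
    (hbβ : b ≤ β) (hβ : β < 1) (hqκ : q ≤ κ) (hκ : κ < 1)
    (h : (a * (1 - β) + β) * r + c ≤ N) :
    postselectedErrorRate a b r c q ≤ N / ((1 - κ) * (1 - β)) := by
  have : 0 < 1 - β := sub_pos.2 hβ
  have : 0 < 1 - κ := sub_pos.2 hκ
  have hq : q < 1 := hqκ.trans_lt hκ
  have : 0 < 1 - q := sub_pos.2 hq
  calc postselectedErrorRate a b r c q
      ≤ postselectedErrorRate a β r c q :=
        monotoneOn_postselectedErrorRate hrc hq a (hbβ.trans_lt hβ) hβ hbβ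
    _ ≤ N / ((1 - q) * (1 - β)) := by
        unfold postselectedErrorRate
        gcongr
    _ ≤ N / ((1 - κ) * (1 - β)) := by gcongr

theorem bounded_error_top_general (A_P A_V B_V A_I n p T r m b₁ t₁ P : K)
    (hAV : 0 ≤ A_V) (hBV : 0 ≤ B_V) (hn : 0 ≤ n) (hp : 0 ≤ p) (hT : 0 < T) (ht₁ : 0 ≤ t₁)
    (hr : 0 ≤ r) (hb₁ : b₁ ≤ 2 / 3) (hmp : m * p ≤ 1 / 2)
    (hR : r * (A_P * n * p / 3 + 2 / 3) ≤ 2 * A_V * n * p)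
    (hT2 : T * (18 * (4 * A_V * n + 2 * B_V) * p + 3 * A_I * n * p) ≤ 2)
    (hP : P ≤ t₁ * (postselectedErrorRate (A_P * n * p) b₁ r (2 * (A_V * n + B_V) * p) (m * p)
          + A_I * n * p)) :
    P ≤ 2 / 3 * (t₁ / T) := by
  have hnumerator : (A_P * n * p * (1 - 2 / 3) + 2 / 3) * r + 2 * (A_V * n + B_V) * p
      ≤ (4 * A_V * n + 2 * B_V) * p := by
    linarith
  have hrate : postselectedErrorRate (A_P * n * p) b₁ r (2 * (A_V * n + B_V) * p) (m * p)
      ≤ 6 * ((4 * A_V * n + 2 * B_V) * p) :=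
    (postselectedErrorRate_le (by positivity) (by positivity) hb₁ (by norm_num) hmp (by norm_num)
      hnumerator).trans_eq (by ring)
  have hvertex : 6 * ((4 * A_V * n + 2 * B_V) * p) + A_I * n * p ≤ 2 / 3 / T := by
    rw [le_div_iff₀ hT]
    linarith
  calc P ≤ t₁ * (postselectedErrorRate (A_P * n * p) b₁ r (2 * (A_V * n + B_V) * p) (m * p)
          + A_I * n * p) := hP
    _ ≤ t₁ * (2 / 3 / T) := by
        gcongr
        exact (add_le_add_left hrate _).trans hvertex
    _ = 2 / 3 * (t₁ / T) := by ring

end PostselectedErrorRate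

/-- Final step of the logical-error bound for the uniformly bounded recursive
CliNR implementation: the logical error rate `P` of the whole implementation is
at most `(2/3) * (t₁ / T)`. -/
theorem bounded_error_top (A_P A_V B_V A_I n p T R m b₁ t₁ P : ℝ)
    (hAP : 0 ≤ A_P) (hAV : 0 ≤ A_V) (hBV : 0 ≤ B_V) (hAI : 0 ≤ A_I) (hn : 0 ≤ n)
    (hp : 0 < p) (hT : 0 < T) (ht₁ : 0 ≤ t₁) (hb₁0 : 0 ≤ b₁) (hb₁ : b₁ ≤ 2 / 3)
    (hAPnp : A_P * n * p ≤ 1 / 2) (hmp : m * p ≤ 1 / 2)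
    (hR : (2 : ℝ) ^ (-R) * (A_P * n * p / 3 + 2 / 3) ≤ 2 * A_V * n * p)
    (hT2 : T * (18 * (4 * A_V * n + 2 * B_V) * p + 3 * A_I * n * p) ≤ 2)
    (hP : P ≤ t₁ * (((A_P * n * p * (1 - b₁) + b₁) * (2 : ℝ) ^ (-R)
          + 2 * (A_V * n + B_V) * p) / ((1 - m * p) * (1 - b₁)) + A_I * n * p)) :
    P ≤ 2 / 3 * (t₁ / T) :=
  bounded_error_top_general A_P A_V B_V A_I n p T (2 ^ (-R)) m b₁ t₁ P hAV hBV hn hp.le hT ht₁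
    (by positivity) hb₁ hmp hR hT2 hP
end

section
/- Let p, m, c, t be real numbers with p > 0, m ≥ 0, c ≥ 0, t ≥ 0, m·p ≤ 1/2 and m + c ≤ 1/(2p). Let D ≥ 1 be a natural number, let b : ℕ → ℝ satisfy 0 ≤ b(ℓ) ≤ 2/3 for all ℓ ∈ {1,…,D}, and let s : ℕ → ℝ satisfy s(ℓ) ≥ 1/(2p) for all ℓ ∈ {1,…,D}, s(D) ≤ 2/(3p), and s(ℓ) ≤ t · ( (m + s(ℓ+1)) / ((1−m·p)·(1−b(ℓ+1))) + c ) for every ℓ with 1 ≤ ℓ ≤ D−1. Then s(1) ≤ (12·t)^{D−1} · (2/(3p)). -/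
/-! An attempt succeeds with probability at least `δ = (1 - α) * (1 - β) ≤ 1`, so a level costs at
most `t * ((m + x) / δ + c) ≤ t * (m + c + x) / δ`, where `x` is the size of a block one level down.
As `m + c ≤ x`, each level multiplies the expected size by at most `(2 / δ) * t`; the constant `12`
is `2 / δ` for `α = 1 / 2` and `β = 2 / 3`. -/

theorem le_pow_mul_of_forall_lt_le_mul_succ {M : Type*} [MonoidWithZero M] [Preorder M]
    [ZeroLEOneClass M] [PosMulMono M] {r : M} (hr : 0 ≤ r) {u : ℕ → M} {n : ℕ}
    (h : ∀ k < n, u k ≤ r * u (k + 1)) : u 0 ≤ r ^ n * u n := by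
  induction n with
  | zero => simp
  | succ n ih =>
    calc u 0 ≤ r ^ n * u n := ih fun k hk => h k (hk.trans n.lt_succ_self)
      _ ≤ r ^ n * (r * u (n + 1)) :=
        mul_le_mul_of_nonneg_left (h n n.lt_succ_self) (pow_nonneg hr n)
      _ = r ^ (n + 1) * u (n + 1) := by rw [pow_succ, mul_assoc]

section OrderedField

variable {K : Type*} [Field K] [LinearOrder K] [IsStrictOrderedRing K]

theorem add_div_add_le_two_div_mul {δ q m c x : K} (hδ : 0 < δ) (hδ_one : δ ≤ 1) (hδq : δ ≤ q)
    (hm : 0 ≤ m) (hc : 0 ≤ c) (hx : m + c ≤ x) : (m + x) / q + c ≤ 2 / δ * x := by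
  have hx_nonneg : 0 ≤ x := (add_nonneg hm hc).trans hx
  calc (m + x) / q + c ≤ (m + x) / δ + c / δ := by
        gcongr
        exact le_div_self hc hδ hδ_one
    _ = (m + c + x) / δ := by ring
    _ ≤ (x + x) / δ := by gcongr
    _ = 2 / δ * x := by ring

theorem gate_overhead_telescoped_general {p m c t α β S : K} (hm : 0 ≤ m) (hc : 0 ≤ c) (ht : 0 ≤ t)
    (hα : 0 ≤ α) (hα_one : α < 1) (hβ : 0 ≤ β) (hβ_one : β < 1) (hmp : m * p ≤ α)
    {D : ℕ} (hD : 1 ≤ D) {b s : ℕ → K} (hb : ∀ ℓ, 1 < ℓ → ℓ ≤ D → b ℓ ≤ β)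
    (hs : ∀ ℓ, 1 < ℓ → ℓ ≤ D → m + c ≤ s ℓ) (hsD : s D ≤ S)
    (hrec : ∀ ℓ, 1 ≤ ℓ → ℓ < D →
      s ℓ ≤ t * ((m + s (ℓ + 1)) / ((1 - m * p) * (1 - b (ℓ + 1))) + c)) :
    s 1 ≤ (2 / ((1 - α) * (1 - β)) * t) ^ (D - 1) * S := by
  obtain ⟨n, rfl⟩ := Nat.exists_eq_add_of_le' hD
  have hα' : 0 < 1 - α := sub_pos.2 hα_one
  have hβ' : 0 < 1 - β := sub_pos.2 hβ_one
  set δ := (1 - α) * (1 - β)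
  have hδ : 0 < δ := mul_pos hα' hβ'
  have hδ_one : δ ≤ 1 := mul_le_one₀ (sub_le_self 1 hα) hβ'.le (sub_le_self 1 hβ)
  have level_step : ∀ k < n, s (k + 1) ≤ 2 / δ * t * s (k + 2) := fun k hk => by
    have hb' : b (k + 2) ≤ β := hb (k + 2) (by lia) (by lia)
    have hδq : δ ≤ (1 - m * p) * (1 - b (k + 2)) :=
      mul_le_mul (by linarith) (by linarith) hβ'.le (by linarith)
    calc s (k + 1) ≤ t * ((m + s (k + 2)) / ((1 - m * p) * (1 - b (k + 2))) + c) :=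
          hrec (k + 1) (by lia) (by lia)
      _ ≤ t * (2 / δ * s (k + 2)) := by
          gcongr
          exact add_div_add_le_two_div_mul hδ hδ_one hδq hm hc (hs (k + 2) (by lia) (by lia))
      _ = 2 / δ * t * s (k + 2) := by ring
  calc s 1 ≤ (2 / δ * t) ^ n * s (n + 1) :=
        le_pow_mul_of_forall_lt_le_mul_succ (u := fun k => s (k + 1)) (by positivity) level_step
    _ ≤ (2 / δ * t) ^ n * S := by gcongr

end OrderedField

/-- Telescoped gate-overhead bound for the uniformly bounded recursive CliNR
implementation of depth `D`: `s 1 ≤ (12 t) ^ (D - 1) * (2 / (3 p))`. -/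
theorem gate_overhead_telescoped (p m c t : ℝ)
    (hp : 0 < p) (hm : 0 ≤ m) (hc : 0 ≤ c) (ht : 0 ≤ t)
    (hmp : m * p ≤ 1 / 2) (hmc : m + c ≤ 1 / (2 * p))
    (D : ℕ) (hD : 1 ≤ D) (b : ℕ → ℝ)
    (hb : ∀ ℓ, 1 ≤ ℓ → ℓ ≤ D → 0 ≤ b ℓ ∧ b ℓ ≤ 2 / 3)
    (s : ℕ → ℝ)
    (hslb : ∀ ℓ, 1 ≤ ℓ → ℓ ≤ D → 1 / (2 * p) ≤ s ℓ)
    (hsD : s D ≤ 2 / (3 * p))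
    (hrec : ∀ ℓ, 1 ≤ ℓ → ℓ ≤ D - 1 →
      s ℓ ≤ t * ((m + s (ℓ + 1)) / ((1 - m * p) * (1 - b (ℓ + 1))) + c)) :
    s 1 ≤ (12 * t) ^ (D - 1) * (2 / (3 * p)) := by
  have h := gate_overhead_telescoped_general (α := 1 / 2) (β := 2 / 3) hm hc ht (by norm_num)
    (by norm_num) (by norm_num) (by norm_num) hmp hD (fun ℓ h₁ h₂ => (hb ℓ h₁.le h₂).2)
    (fun ℓ h₁ h₂ => hmc.trans (hslb ℓ h₁.le h₂)) hsD
    (fun ℓ h₁ h₂ => hrec ℓ h₁ (Nat.le_sub_one_of_lt h₂))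
  rwa [show (2 / ((1 - 1 / 2) * (1 - 2 / 3)) : ℝ) = 12 by norm_num] at h
end
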